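/- Fix N ≥ 1 and write a = 1/2^N; suppose ‖(t,s) − (t',s')‖_2 ≤ 1 for all (t,s),(t',s') ∈ SG' × SG''. Let f : SG' × SG'' → ℝ be the continuous function satisfying f(L_ω(t),K_η(s)) = α_{ωη}(t,s)·f(t,s) + h_{ωη}(t,s) for all ω,η ∈ I^N and (t,s) ∈ SG' × SG''. Suppose each h_{ωη} is Hölder continuous with exponent s_h ∈ (0,1] and constant K_h, and each α_{ωη} is Hölder continuous with exponent s_{α_{ωη}} ∈ (0,1] and constant K_{α_{ωη}}, with ‖α_{ωη}‖_∞ < 1. Set ‖α‖_∞ = max_{ω,η ∈ I^N} ‖α_{ωη}‖_∞, s_α = min_{ω,η} s_{α_{ωη}}, and s = min{s_h, s_α}. If ‖α‖_∞ > 1/2^N and s − 1 + ln(‖α‖_∞)/ln(a) > 0, then for every λ with 0 < λ ≤ s − 1 + ln(‖α‖_∞)/ln(a), the function f is Hölder continuous with exponent λ: there is a constant C with |f(t,s) − f(t',s')| ≤ C·‖(t,s)−(t',s')‖_2^{λ} for all points of SG' × SG''. -/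

import Mathlib

noncomputable section

/-- Points of the plane ℝ². -/
abbrev E2 := EuclideanSpace ℝ (Fin 2)

/-- The contraction `L_i(t) = (t + p_i)/2` of the plane towards the vertex `p i`. -/
def Lmap (p : Fin 3 → E2) (i : Fin 3) (t : E2) : E2 := (2 : ℝ)⁻¹ • (t + p i)

/-- `p 1, p 2, p 3` are the vertices of an equilateral triangle: pairwise distinct
points with all three pairwise distances equal. -/
def IsEquilateral (p : Fin 3 → E2) : Prop :=
  Function.Injective p ∧
    ∀ i j k l : Fin 3, i ≠ j → k ≠ l → dist (p i) (p j) = dist (p k) (p l)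

/-- `S` is the Sierpiński gasket with vertex set `p`: the unique nonempty compact set
invariant under the three contractions `L_i(t) = (t + p_i)/2`. -/
def IsSG (p : Fin 3 → E2) (S : Set E2) : Prop :=
  IsEquilateral p ∧ S.Nonempty ∧ IsCompact S ∧ S = ⋃ i : Fin 3, Lmap p i '' S

/-- For a word `ω = ω₁ω₂…ω_n` over `I = {1,2,3}`, the composition
`L_ω = L_{ω₁} ∘ L_{ω₂} ∘ ⋯ ∘ L_{ω_n}`. -/
def wordMap (p : Fin 3 → E2) {n : ℕ} (ω : Fin n → Fin 3) : E2 → E2 :=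
  (List.ofFn fun k => Lmap p (ω k)).foldr (· ∘ ·) id

/-- The word alphabet `I^N`: words of length `N` over `I = {1,2,3}`. -/
abbrev Word (N : ℕ) := Fin N → Fin 3

/-- The Euclidean (`ℓ²`) distance `‖(t,s) − (t',s')‖₂` on the product `ℝ² × ℝ²`. -/
def dist2 (x y : E2 × E2) : ℝ := Real.sqrt (dist x.1 y.1 ^ 2 + dist x.2 y.2 ^ 2)

/-- `g` is Hölder continuous on `S` with constant `K` and exponent `β` (with respect
to the Euclidean distance on `ℝ² × ℝ²`). -/
def HolderOn2 (S : Set (E2 × E2)) (g : E2 × E2 → ℝ) (K β : ℝ) : Prop :=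
  ∀ x ∈ S, ∀ y ∈ S, |g x - g y| ≤ K * dist2 x y ^ β

/-- The sup-norm `‖g‖_∞ = sup_{x ∈ S} |g x|` of a function on `S`. -/
noncomputable def supAbs (S : Set (E2 × E2)) (g : E2 × E2 → ℝ) : ℝ :=
  sSup ((fun x => |g x|) '' S)

/-- `t` and `t'` lie in a common cell of level `m`. -/
def SameCell (p : Fin 3 → E2) (S : Set E2) : ℕ → E2 → E2 → Prop
  | 0, t, t' => t ∈ S ∧ t' ∈ S
  | m + 1, t, t' => ∃ i u v, SameCell p S m u v ∧ t = Lmap p i u ∧ t' = Lmap p i v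

/-- Barycentric coordinates of an equilateral triangle. -/
def bary (p : Fin 3 → E2) (j : Fin 3) (x : E2) : ℝ :=
  1 / 3 + 2 / (dist (p 0) (p 1)) ^ 2 *
    inner ℝ (x - (3 : ℝ)⁻¹ • (p 0 + p 1 + p 2)) (p j - (3 : ℝ)⁻¹ • (p 0 + p 1 + p 2))

lemma dist_Lmap (p : Fin 3 → E2) (i : Fin 3) (t t' : E2) :
    dist (Lmap p i t) (Lmap p i t') = dist t t' / 2 := by
  unfold Lmap
  rw [dist_smul₀, dist_add_right, Real.norm_of_nonneg (by norm_num)]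
  ring

lemma Lmap_mem {p : Fin 3 → E2} {S : Set E2} (hS : IsSG p S) (i : Fin 3) {t : E2} (ht : t ∈ S) :
    Lmap p i t ∈ S := by
  rw [hS.2.2.2]
  exact Set.mem_iUnion.2 ⟨i, t, ht, rfl⟩

lemma exists_Lmap {p : Fin 3 → E2} {S : Set E2} (hS : IsSG p S) {t : E2} (ht : t ∈ S) :
    ∃ i, ∃ u ∈ S, t = Lmap p i u := by
  rw [hS.2.2.2] at ht
  obtain ⟨i, u, hu, rfl⟩ := Set.mem_iUnion.1 ht
  exact ⟨i, u, hu, rfl⟩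

lemma Lmap_vertex (p : Fin 3 → E2) (i : Fin 3) : Lmap p i (p i) = p i := by
  unfold Lmap
  rw [← two_smul ℝ, smul_smul]; norm_num

lemma Lmap_comm (p : Fin 3 → E2) (i j : Fin 3) : Lmap p i (p j) = Lmap p j (p i) := by
  unfold Lmap
  rw [add_comm]

lemma vertex_mem {p : Fin 3 → E2} {S : Set E2} (hS : IsSG p S) (i : Fin 3) : p i ∈ S := by
  obtain ⟨x, hx, hmin⟩ := hS.2.2.1.exists_isMinOn hS.2.1
    (f := fun x => dist x (p i)) (by fun_prop)
  have h1 : dist x (p i) ≤ dist (Lmap p i x) (p i) := hmin (Lmap_mem hS i hx)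
  have h2 : dist (Lmap p i x) (p i) = dist x (p i) / 2 := by
    conv_lhs => rw [← Lmap_vertex p i]
    rw [Lmap_vertex p i] 
    rw [← dist_Lmap p i, Lmap_vertex p i]
  have h3 : dist x (p i) = 0 := by
    have := dist_nonneg (x := x) (y := p i)
    linarith
  rw [dist_eq_zero] at h3
  exact h3 ▸ hx

lemma side_pos {p : Fin 3 → E2} (hp : IsEquilateral p) : 0 < dist (p 0) (p 1) :=
  dist_pos.2 (fun h => by simpa using hp.1 h)

lemma bary_vertex {p : Fin 3 → E2} (hp : IsEquilateral p) (i j : Fin 3) :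
    bary p j (p i) = if i = j then 1 else 0 := by
  have hl := side_pos hp
  have h02 := hp.2 0 2 0 1 (by decide) (by decide)
  have h12 := hp.2 1 2 0 1 (by decide) (by decide)
  unfold bary
  generalize hd : dist (p 0) (p 1) = d at *
  have e01 : inner ℝ (p 0 - p 1) (p 0 - p 1) = d ^ 2 := by
    rw [real_inner_self_eq_norm_sq, ← dist_eq_norm, hd]
  have e02 : inner ℝ (p 0 - p 2) (p 0 - p 2) = d ^ 2 := by
    rw [real_inner_self_eq_norm_sq, ← dist_eq_norm, h02]
  have e12 : inner ℝ (p 1 - p 2) (p 1 - p 2) = d ^ 2 := by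
    rw [real_inner_self_eq_norm_sq, ← dist_eq_norm, h12]
  have c1 := real_inner_comm (p 0) (p 1)
  have c2 := real_inner_comm (p 0) (p 2)
  have c3 := real_inner_comm (p 1) (p 2)
  have key : inner ℝ (p i - (3 : ℝ)⁻¹ • (p 0 + p 1 + p 2)) (p j - (3 : ℝ)⁻¹ • (p 0 + p 1 + p 2))
      = (if i = j then d ^ 2 / 3 else - d ^ 2 / 6) := by
    fin_cases i <;> fin_cases j <;>
    simp [inner_sub_left, inner_sub_right, inner_add_left, inner_add_right, inner_smul_left,
      inner_smul_right, -inner_self_eq_norm_sq_to_K] at e01 e02 e12 ⊢ <;>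
    linarith
  rw [key]
  split_ifs
  · field_simp; norm_num
  · field_simp; norm_num

lemma bary_Lmap {p : Fin 3 → E2} (hp : IsEquilateral p) (i j : Fin 3) (x : E2) :
    bary p j (Lmap p i x) = (bary p j x + if i = j then 1 else 0) / 2 := by
  rw [← bary_vertex hp i j]
  unfold bary Lmap
  simp only [inner_sub_left, inner_smul_left, inner_add_left]
  simp
  ring

lemma bary_sum (p : Fin 3 → E2) (x : E2) : bary p 0 x + bary p 1 x + bary p 2 x = 1 := by
  have : (p 0 - (3 : ℝ)⁻¹ • (p 0 + p 1 + p 2)) + (p 1 - (3 : ℝ)⁻¹ • (p 0 + p 1 + p 2))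
     + (p 2 - (3 : ℝ)⁻¹ • (p 0 + p 1 + p 2)) = 0 := by module
  have h2 : ∀ y : E2, inner ℝ y ((p 0 - (3 : ℝ)⁻¹ • (p 0 + p 1 + p 2)) + (p 1 - (3 : ℝ)⁻¹ • (p 0 + p 1 + p 2))
     + (p 2 - (3 : ℝ)⁻¹ • (p 0 + p 1 + p 2))) = 0 := by
    intro y; rw [this, inner_zero_right]
  have h3 := h2 (x - (3 : ℝ)⁻¹ • (p 0 + p 1 + p 2))
  rw [inner_add_right, inner_add_right] at h3
  unfold bary
  linear_combination (2 / (dist (p 0) (p 1)) ^ 2) * h3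

lemma bary_lip (p : Fin 3 → E2) :
    ∃ Λ : ℝ, 0 < Λ ∧ ∀ j x y, bary p j x - bary p j y ≤ Λ * dist x y := by
  set c := (3 : ℝ)⁻¹ • (p 0 + p 1 + p 2) with hc
  refine ⟨2 / (dist (p 0) (p 1)) ^ 2 * (∑ j, ‖p j - c‖) + 1, by positivity, ?_⟩
  intro j x y
  have h1 : bary p j x - bary p j y =
      2 / (dist (p 0) (p 1)) ^ 2 * inner ℝ (x - y) (p j - c) := by
    unfold bary
    rw [← hc, show x - y = (x - c) - (y - c) by abel, inner_sub_left (x - c)]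
    ring
  have h2 := real_inner_le_norm (x - y) (p j - c)
  have h3 : ‖p j - c‖ ≤ ∑ j, ‖p j - c‖ :=
    Finset.single_le_sum (f := fun j => ‖p j - c‖) (fun _ _ => norm_nonneg _) (Finset.mem_univ j)
  rw [h1, dist_eq_norm x y]
  calc _ ≤ 2 / (dist (p 0) (p 1)) ^ 2 * (‖x - y‖ * ∑ j, ‖p j - c‖) := by
        gcongr; exact h2.trans (by gcongr)
    _ ≤ _ := by nlinarith [norm_nonneg (x - y)]

lemma bary_nonneg {p : Fin 3 → E2} {S : Set E2} (hS : IsSG p S) (j : Fin 3) {x : E2} (hx : x ∈ S) :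
    0 ≤ bary p j x := by
  obtain ⟨y, hy, hmin⟩ := hS.2.2.1.exists_isMinOn hS.2.1 (f := fun x => bary p j x)
    (by unfold bary; fun_prop)
  obtain ⟨i, u, hu, rfl⟩ := exists_Lmap hS hy
  have h1 : bary p j (Lmap p i u) ≤ bary p j u := hmin hu
  have h2 : bary p j (Lmap p i u) ≤ bary p j x := hmin hx
  have h3 := bary_Lmap hS.1 i j u
  split_ifs at h3 <;> linarith

lemma bary_add_le {p : Fin 3 → E2} {S : Set E2} (hS : IsSG p S) {i j : Fin 3} (hij : i ≠ j)
    {x : E2} (hx : x ∈ S) : bary p i x + bary p j x ≤ 1 := by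
  have h := bary_sum p x
  have h0 := bary_nonneg hS 0 hx
  have h1 := bary_nonneg hS 1 hx
  have h2 := bary_nonneg hS 2 hx
  fin_cases i <;> fin_cases j <;> simp at hij ⊢ <;> linarith

lemma bary_le_one {p : Fin 3 → E2} {S : Set E2} (hS : IsSG p S) (j : Fin 3)
    {x : E2} (hx : x ∈ S) : bary p j x ≤ 1 := by
  have h := bary_sum p x
  have h0 := bary_nonneg hS 0 hx
  have h1 := bary_nonneg hS 1 hx
  have h2 := bary_nonneg hS 2 hx
  fin_cases j <;> simp <;> linarith

lemma SameCell.symm {p : Fin 3 → E2} {S : Set E2} : ∀ {m : ℕ} {t t' : E2},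
    SameCell p S m t t' → SameCell p S m t' t
  | 0, _, _, h => ⟨h.2, h.1⟩
  | _ + 1, _, _, ⟨i, u, u', h, e, e'⟩ => ⟨i, u', u, h.symm, e', e⟩

lemma SameCell.refl {p : Fin 3 → E2} {S : Set E2} (hS : IsSG p S) : ∀ (m : ℕ) {t : E2},
    t ∈ S → SameCell p S m t t
  | 0, _, h => ⟨h, h⟩
  | m + 1, t, h => by
    obtain ⟨i, u, hu, e⟩ := exists_Lmap hS h
    exact ⟨i, u, u, SameCell.refl hS m hu, e, e⟩

lemma SameCell.mem {p : Fin 3 → E2} {S : Set E2} (hS : IsSG p S) : ∀ {m : ℕ} {t t' : E2},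
    SameCell p S m t t' → t ∈ S ∧ t' ∈ S
  | 0, _, _, h => h
  | _ + 1, _, _, ⟨i, u, u', h, e, e'⟩ => by
    subst e e'
    exact ⟨Lmap_mem hS i (h.mem hS).1, Lmap_mem hS i (h.mem hS).2⟩

lemma SameCell.dist_le {p : Fin 3 → E2} {S : Set E2}
    (hd : ∀ t ∈ S, ∀ t' ∈ S, dist t t' ≤ 1) : ∀ {m : ℕ} {t t' : E2},
    SameCell p S m t t' → dist t t' ≤ (1 / 2) ^ m
  | 0, _, _, h => by simpa using hd _ h.1 _ h.2
  | m + 1, _, _, ⟨i, u, u', h, e, e'⟩ => by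
    subst e e'
    have := h.dist_le hd
    rw [dist_Lmap, pow_succ]
    linarith

lemma sameCell_vertex {p : Fin 3 → E2} {S : Set E2} (hS : IsSG p S) (j : Fin 3) :
    ∀ (m : ℕ) {t : E2}, t ∈ S → 1 - (1 / 2) ^ m < bary p j t → SameCell p S m t (p j)
  | 0, _, h, _ => ⟨h, vertex_mem hS j⟩
  | m + 1, t, h, hb => by
    obtain ⟨i, u, hu, rfl⟩ := exists_Lmap hS h
    have h1 := bary_Lmap hS.1 i j u
    have h2 := bary_le_one hS j hu
    have h3 : ((1 : ℝ) / 2) ^ m ≤ 1 := pow_le_one₀ (by norm_num) (by norm_num)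
    rw [pow_succ] at hb
    by_cases hij : i = j
    · subst hij
      simp only [if_true] at h1
      exact ⟨i, u, p i, sameCell_vertex hS i m hu (by linarith), rfl, (Lmap_vertex p i).symm⟩
    · rw [if_neg hij] at h1
      linarith

lemma chain {p : Fin 3 → E2} {S : Set E2} (hS : IsSG p S) {Λ : ℝ}
    (hΛ : ∀ j x y, bary p j x - bary p j y ≤ Λ * dist x y) :
    ∀ (m : ℕ) {t t' : E2}, t ∈ S → t' ∈ S → Λ * dist t t' < (1 / 2) ^ m →
      ∃ u, SameCell p S m t u ∧ SameCell p S m u t'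
  | 0, t, _, h, h', _ => ⟨t, ⟨h, h⟩, ⟨h, h'⟩⟩
  | m + 1, t, t', h, h', hb => by
    obtain ⟨i, τ, hτ, rfl⟩ := exists_Lmap hS h
    obtain ⟨j, τ', hτ', rfl⟩ := exists_Lmap hS h'
    rw [pow_succ] at hb
    by_cases hij : i = j
    · subst hij
      rw [dist_Lmap] at hb
      obtain ⟨u, h1, h2⟩ := chain hS hΛ m hτ hτ' (by linarith)
      exact ⟨Lmap p i u, ⟨i, _, _, h1, rfl, rfl⟩, ⟨i, _, _, h2, rfl, rfl⟩⟩
    · have a1 := bary_Lmap hS.1 i j τ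
      have a2 := bary_Lmap hS.1 j j τ'
      have a3 := bary_Lmap hS.1 j i τ'
      have a4 := bary_Lmap hS.1 i i τ
      rw [if_neg hij] at a1
      rw [if_neg (Ne.symm hij)] at a3
      simp only [if_true] at a2 a4
      have b1 := bary_nonneg hS j hτ'
      have b2 := bary_nonneg hS i hτ
      have c1 := hΛ j (Lmap p j τ') (Lmap p i τ)
      have c2 := hΛ i (Lmap p i τ) (Lmap p j τ')
      rw [dist_comm] at c1
      refine ⟨Lmap p i (p j), ⟨i, _, _, sameCell_vertex hS j m hτ (by linarith), rfl, rfl⟩,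
        ⟨j, p i, τ', (sameCell_vertex hS i m hτ' (by linarith)).symm, Lmap_comm p i j, rfl⟩⟩

lemma SameCell.word {p : Fin 3 → E2} {S : Set E2} : ∀ (N : ℕ) {m : ℕ} {t t' : E2},
    SameCell p S (m + N) t t' → ∃ (ω : Fin N → Fin 3) (u u' : E2), SameCell p S m u u' ∧
      t = wordMap p ω u ∧ t' = wordMap p ω u'
  | 0, _, t, t', h => ⟨Fin.elim0, t, t', h, by simp [wordMap], by simp [wordMap]⟩
  | N + 1, m, _, _, ⟨i, v, v', h, e, e'⟩ => by
    obtain ⟨ω, u, u', h1, rfl, rfl⟩ := SameCell.word N h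
    refine ⟨Fin.cons i ω, u, u', h1, ?_, ?_⟩
    · rw [e]; simp [wordMap, List.ofFn_succ]
    · rw [e']; simp [wordMap, List.ofFn_succ]

lemma dist_fst_le (x y : E2 × E2) : dist x.1 y.1 ≤ dist2 x y :=
  Real.le_sqrt_of_sq_le (by nlinarith [sq_nonneg (dist x.2 y.2)])

lemma dist_snd_le (x y : E2 × E2) : dist x.2 y.2 ≤ dist2 x y :=
  Real.le_sqrt_of_sq_le (by nlinarith [sq_nonneg (dist x.1 y.1)])

lemma dist2_le {x y : E2 × E2} {r : ℝ} (h1 : dist x.1 y.1 ≤ r) (h2 : dist x.2 y.2 ≤ r) :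
    dist2 x y ≤ 2 * r := by
  have := dist_nonneg (x := x.1) (y := y.1)
  have := dist_nonneg (x := x.2) (y := y.2)
  apply Real.sqrt_le_iff.2
  constructor
  · linarith
  · nlinarith

lemma dist2_nonneg (x y : E2 × E2) : 0 ≤ dist2 x y := Real.sqrt_nonneg _

set_option maxHeartbeats 1000000 in
/-- Core argument with an abstract contraction bound. -/
lemma core {p q : Fin 3 → E2} {S T : Set E2} (hS : IsSG p S) (hT : IsSG q T) {N : ℕ} (hN : 1 ≤ N)
    (hdiam : ∀ x ∈ S ×ˢ T, ∀ y ∈ S ×ˢ T, dist2 x y ≤ 1)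
    (α h : Word N → Word N → E2 × E2 → ℝ)
    (f : E2 × E2 → ℝ) {M : ℝ} (hM : ∀ x ∈ S ×ˢ T, |f x| ≤ M)
    (hf : ∀ ω η : Word N, ∀ t ∈ S, ∀ s ∈ T,
      f (wordMap p ω t, wordMap q η s) = α ω η (t, s) * f (t, s) + h ω η (t, s))
    {s lam K : ℝ} (hlam : 0 < lam) (hls : lam < s) (hs1 : s ≤ 1) (hK : 0 ≤ K)
    (hh : ∀ ω η, HolderOn2 (S ×ˢ T) (h ω η) K s)
    (hα : ∀ ω η, HolderOn2 (S ×ˢ T) (α ω η) K s)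
    (hA : ∀ ω η, ∀ x ∈ S ×ˢ T, |α ω η x| ≤ ((1 / 2 : ℝ) ^ N) ^ lam) :
    ∃ C : ℝ, HolderOn2 (S ×ˢ T) f C lam := by
  set a : ℝ := (1 / 2 : ℝ) ^ N with ha
  have ha0 : 0 < a := by positivity
  have ha1 : a < 1 := pow_lt_one₀ (by norm_num) (by norm_num) (by omega)
  set r := a ^ lam with hr
  set σ := a ^ s with hσ
  have hr0 : 0 < r := Real.rpow_pos_of_pos ha0 _
  have hσ0 : 0 < σ := Real.rpow_pos_of_pos ha0 _
  have hσr : σ < r := Real.rpow_lt_rpow_of_exponent_gt ha0 ha1 hls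
  obtain ⟨t0, ht0⟩ := hS.2.1
  obtain ⟨s0, hs0⟩ := hT.2.1
  have hM0 : 0 ≤ M := (abs_nonneg _).trans (hM (t0, s0) ⟨ht0, hs0⟩)
  have hdS : ∀ t ∈ S, ∀ t' ∈ S, dist t t' ≤ 1 := fun t ht t' ht' =>
    (dist_fst_le (t, s0) (t', s0)).trans (hdiam _ ⟨ht, hs0⟩ _ ⟨ht', hs0⟩)
  have hdT : ∀ t ∈ T, ∀ t' ∈ T, dist t t' ≤ 1 := fun t ht t' ht' =>
    (dist_snd_le (t0, t) (t0, t')).trans (hdiam _ ⟨ht0, ht⟩ _ ⟨ht0, ht'⟩)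
  set B := 2 * K * (M + 1) with hB
  have hB0 : 0 ≤ B := by positivity
  set C' := B / (r - σ) with hC'
  have hC'0 : 0 ≤ C' := div_nonneg hB0 (by linarith)
  have hC'B : C' * (r - σ) = B := div_mul_cancel₀ _ (by linarith)
  set C := C' + 2 * M with hC
  have hC0 : 0 ≤ C := by positivity
  have osc : ∀ (n : ℕ) (t t' u u' : E2), SameCell p S (n * N) t t' → SameCell q T (n * N) u u' →
      |f (t, u) - f (t', u')| ≤ C * r ^ n - C' * σ ^ n := by
    intro n
    induction n with
    | zero =>
      intro t t' u u' h1 h2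
      have m1 := h1.mem hS
      have m2 := h2.mem hT
      have := hM (t, u) ⟨m1.1, m2.1⟩
      have := hM (t', u') ⟨m1.2, m2.2⟩
      have := abs_sub (f (t, u)) (f (t', u'))
      simp only [pow_zero, mul_one]
      linarith
    | succ n ih =>
      intro t t' u u' h1 h2
      rw [Nat.succ_mul] at h1 h2
      obtain ⟨ω, v, v', g1, rfl, rfl⟩ := h1.word N
      obtain ⟨η, w, w', g2, rfl, rfl⟩ := h2.word N
      have m1 := g1.mem hS
      have m2 := g2.mem hT
      have mx : (v, w) ∈ S ×ˢ T := ⟨m1.1, m2.1⟩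
      have my : (v', w') ∈ S ×ˢ T := ⟨m1.2, m2.2⟩
      rw [hf ω η v m1.1 w m2.1, hf ω η v' m1.2 w' m2.2]
      have hI := ih v v' w w' g1 g2
      have hd : dist2 (v, w) (v', w') ≤ 2 * a ^ n := by
        have e : a ^ n = (1 / 2) ^ (n * N) := by rw [ha, ← pow_mul, mul_comm]
        rw [e]
        exact dist2_le (g1.dist_le hdS) (g2.dist_le hdT)
      have hds : dist2 (v, w) (v', w') ^ s ≤ 2 * σ ^ n := by
        calc dist2 (v, w) (v', w') ^ s ≤ (2 * a ^ n) ^ s :=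
              Real.rpow_le_rpow (dist2_nonneg _ _) hd (by linarith)
          _ = 2 ^ s * (a ^ n) ^ s := Real.mul_rpow (by norm_num) (by positivity)
          _ = 2 ^ s * σ ^ n := by
              rw [hσ, Real.rpow_pow_comm ha0.le]
          _ ≤ 2 ^ (1 : ℝ) * σ ^ n := by
              gcongr
              norm_num
          _ = 2 * σ ^ n := by norm_num
      have k1 := (hα ω η _ mx _ my).trans (mul_le_mul_of_nonneg_left hds hK)
      have k2 := (hh ω η _ mx _ my).trans (mul_le_mul_of_nonneg_left hds hK)
      have k3 := hA ω η _ mx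
      have k4 := hM _ my
      have e : α ω η (v, w) * f (v, w) + h ω η (v, w) - (α ω η (v', w') * f (v', w') + h ω η (v', w'))
        = α ω η (v, w) * (f (v, w) - f (v', w')) + (α ω η (v, w) - α ω η (v', w')) * f (v', w')
          + (h ω η (v, w) - h ω η (v', w')) := by ring
      rw [e]
      calc _ ≤ |α ω η (v, w)| * |f (v, w) - f (v', w')|
              + |α ω η (v, w) - α ω η (v', w')| * |f (v', w')|
              + |h ω η (v, w) - h ω η (v', w')| := by
            refine (abs_add_le _ _).trans ?_
            gcongr
            refine (abs_add_le _ _).trans ?_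
            rw [abs_mul, abs_mul]
        _ ≤ r * (C * r ^ n - C' * σ ^ n) + K * (2 * σ ^ n) * M + K * (2 * σ ^ n) := by
            gcongr
        _ = C * r ^ (n + 1) - C' * σ ^ (n + 1) := by
            rw [pow_succ, pow_succ]
            linear_combination (- σ ^ n) * hC'B + σ ^ n * hB
  obtain ⟨Λ1, hΛ1, hb1⟩ := bary_lip p
  obtain ⟨Λ2, hΛ2, hb2⟩ := bary_lip q
  set c := 1 / (2 * (Λ1 + Λ2)) with hc
  have hc0 : 0 < c := by positivity
  have hcl : 0 < c ^ lam := Real.rpow_pos_of_pos hc0 _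
  have hC2 : 0 ≤ 2 * C / r := by positivity
  refine ⟨(2 * M + 2 * C / r) / c ^ lam, ?_⟩
  rintro ⟨t, u⟩ hx ⟨t', u'⟩ hy
  set d := dist2 (t, u) (t', u') with hd
  have hdt : dist t t' ≤ d := dist_fst_le (t, u) (t', u')
  have hdu : dist u u' ≤ d := dist_snd_le (t, u) (t', u')
  have hd0 : 0 ≤ d := dist2_nonneg _ _
  have hrw : (2 * M + 2 * C / r) / c ^ lam * d ^ lam = (2 * M + 2 * C / r) * (d / c) ^ lam := by
    rw [Real.div_rpow hd0 hc0.le]; ring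
  rw [hrw]
  have hdl : 0 ≤ (d / c) ^ lam := Real.rpow_nonneg (by positivity) _
  rcases hd0.eq_or_lt with hz | hdpos
  · have e1 : t = t' := dist_le_zero.1 (by linarith)
    have e2 : u = u' := dist_le_zero.1 (by linarith)
    subst e1 e2
    simp only [sub_self, abs_zero]
    positivity
  by_cases hcd : d ≤ c
  · obtain ⟨n, hn1, hn2⟩ := exists_nat_pow_near_of_lt_one (x := d / c) (y := a) (by positivity)
      ((div_le_one hc0).2 hcd) ha0 ha1
    have hn3 : d ≤ c * a ^ n := by rw [div_le_iff₀ hc0] at hn2; linarith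
    have hsm : (Λ1 + Λ2) * d < (1 / 2) ^ (n * N) := by
      have e : a ^ n = (1 / 2) ^ (n * N) := by rw [ha, ← pow_mul, mul_comm]
      rw [← e]
      have : 0 < a ^ n := by positivity
      calc (Λ1 + Λ2) * d ≤ (Λ1 + Λ2) * (c * a ^ n) := by gcongr
        _ = a ^ n / 2 := by rw [hc]; field_simp
        _ < a ^ n := by linarith
    obtain ⟨v, g1, g2⟩ := chain hS hb1 (n * N) hx.1 hy.1 (by
      refine lt_of_le_of_lt ?_ hsm
      exact mul_le_mul (by linarith) hdt dist_nonneg (by positivity))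
    obtain ⟨w, k1, k2⟩ := chain hT hb2 (n * N) hx.2 hy.2 (by
      refine lt_of_le_of_lt ?_ hsm
      exact mul_le_mul (by linarith) hdu dist_nonneg (by positivity))
    have o1 := osc n _ _ _ _ g1 k1
    have o2 := osc n _ _ _ _ g2 k2
    have hσn : 0 ≤ C' * σ ^ n := by positivity
    have tri := abs_sub_le (f (t, u)) (f (v, w)) (f (t', u'))
    have hfin : r ^ (n + 1) ≤ (d / c) ^ lam := by
      rw [hr, Real.rpow_pow_comm ha0.le]
      exact Real.rpow_le_rpow (by positivity) hn1.le hlam.le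
    calc |f (t, u) - f (t', u')| ≤ 2 * C * r ^ n := by
          simp only at o1 o2
          linarith
      _ = 2 * C / r * r ^ (n + 1) := by rw [pow_succ]; field_simp
      _ ≤ 2 * C / r * (d / c) ^ lam := by gcongr
      _ ≤ _ := mul_le_mul_of_nonneg_right (by linarith) hdl
  · have h1 : 1 ≤ (d / c) ^ lam :=
      Real.one_le_rpow ((one_le_div hc0).2 (by linarith)) hlam.le
    have := hM _ hx
    have := hM _ hy
    have := abs_sub (f (t, u)) (f (t', u'))
    have h5 := mul_le_mul_of_nonneg_left h1 (show 0 ≤ 2 * M + 2 * C / r by positivity)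
    linarith

/-- If `‖α‖_∞ := max_{ω,η} ‖α_{ωη}‖_∞ > 1/2^N` (and the exponent bound
`s − 1 + ln‖α‖_∞ / ln a` is positive, where `a = 1/2^N`), then the fractal
interpolation function `f` on `SG' × SG''` is Hölder continuous with any exponent
`λ` satisfying `0 < λ ≤ s − 1 + ln‖α‖_∞ / ln a`, where `s = min{s_h, s_α}`. -/
theorem stmt_12 (p q : Fin 3 → E2) (SG' SG'' : Set E2)
    (hSG' : IsSG p SG') (hSG'' : IsSG q SG'') (N : ℕ) (hN : 1 ≤ N)
    (hdiam : ∀ x ∈ SG' ×ˢ SG'', ∀ y ∈ SG' ×ˢ SG'', dist2 x y ≤ 1)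
    (α h : Word N → Word N → E2 × E2 → ℝ)
    (f : E2 × E2 → ℝ) (hfc : ContinuousOn f (SG' ×ˢ SG''))
    (hf : ∀ ω η : Word N, ∀ t ∈ SG', ∀ s ∈ SG'',
      f (wordMap p ω t, wordMap q η s) = α ω η (t, s) * f (t, s) + h ω η (t, s))
    (sh : ℝ) (hsh : 0 < sh ∧ sh ≤ 1) (Kh : ℝ)
    (hhHolder : ∀ ω η, HolderOn2 (SG' ×ˢ SG'') (h ω η) Kh sh)
    (sα : Word N → Word N → ℝ) (hsα : ∀ ω η, 0 < sα ω η ∧ sα ω η ≤ 1)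
    (Kα : Word N → Word N → ℝ)
    (hαHolder : ∀ ω η, HolderOn2 (SG' ×ˢ SG'') (α ω η) (Kα ω η) (sα ω η))
    (hαnorm : ∀ ω η, supAbs (SG' ×ˢ SG'') (α ω η) < 1)
    (hcase : 1 / 2 ^ N < (⨆ ωη : Word N × Word N, supAbs (SG' ×ˢ SG'') (α ωη.1 ωη.2)))
    (hpos : 0 < min sh (⨅ ωη : Word N × Word N, sα ωη.1 ωη.2) - 1 +
      Real.log (⨆ ωη : Word N × Word N, supAbs (SG' ×ˢ SG'') (α ωη.1 ωη.2)) /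
        Real.log (1 / 2 ^ N)) :
    ∀ lam : ℝ, 0 < lam →
      lam ≤ min sh (⨅ ωη : Word N × Word N, sα ωη.1 ωη.2) - 1 +
        Real.log (⨆ ωη : Word N × Word N, supAbs (SG' ×ˢ SG'') (α ωη.1 ωη.2)) /
          Real.log (1 / 2 ^ N) →
      ∃ C : ℝ, HolderOn2 (SG' ×ˢ SG'') f C lam := by
  intro lam hlam hle
  set A := ⨆ ωη : Word N × Word N, supAbs (SG' ×ˢ SG'') (α ωη.1 ωη.2) with hAdef
  set s := min sh (⨅ ωη : Word N × Word N, sα ωη.1 ωη.2) with hs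
  have ha : (1 : ℝ) / 2 ^ N = (1 / 2) ^ N := by rw [div_pow, one_pow]
  rw [ha] at hcase hle
  have ha0 : (0 : ℝ) < (1 / 2) ^ N := by positivity
  have ha1 : ((1 : ℝ) / 2) ^ N < 1 := pow_lt_one₀ (by norm_num) (by norm_num) (by omega)
  have hla : Real.log ((1 / 2 : ℝ) ^ N) < 0 := Real.log_neg ha0 ha1
  have hA0 : 0 < A := ha0.trans hcase
  have hlA : Real.log ((1 / 2 : ℝ) ^ N) < Real.log A := Real.log_lt_log ha0 hcase
  have hth : Real.log A / Real.log ((1 / 2 : ℝ) ^ N) < 1 := by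
    rw [div_lt_one_of_neg hla]; exact hlA
  have hs1 : s ≤ 1 := (min_le_left _ _).trans hsh.2
  have hls : lam < s := by linarith
  have hAr : A ≤ ((1 / 2 : ℝ) ^ N) ^ lam := by
    have h1 : lam ≤ Real.log A / Real.log ((1 / 2 : ℝ) ^ N) := by linarith
    rw [le_div_iff_of_neg hla] at h1
    rw [Real.rpow_def_of_pos ha0, mul_comm, ← Real.log_le_iff_le_exp hA0]
    exact h1
  have hssα : ∀ ω η, s ≤ sα ω η := fun ω η =>
    (min_le_right _ _).trans (ciInf_le (Set.finite_range _).bddBelow (ω, η))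
  have hs0 : 0 < s := hlam.trans hls
  have hcomp : IsCompact (SG' ×ˢ SG'') := hSG'.2.2.1.prod hSG''.2.2.1
  obtain ⟨M, hM⟩ := hcomp.exists_bound_of_continuousOn hfc
  have hmono : ∀ (g : E2 × E2 → ℝ) (K K' β : ℝ), |K| ≤ K' → s ≤ β →
      HolderOn2 (SG' ×ˢ SG'') g K β → HolderOn2 (SG' ×ˢ SG'') g K' s := by
    intro g K K' β hK hβ hg x hx y hy
    have h0 := dist2_nonneg x y
    calc _ ≤ K * dist2 x y ^ β := hg x hx y hy
      _ ≤ |K| * dist2 x y ^ β := by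
          gcongr
          exact le_abs_self K
      _ ≤ K' * dist2 x y ^ s := by
          have := Real.rpow_le_rpow_of_exponent_ge' h0 (hdiam x hx y hy) hs0.le hβ
          have := abs_nonneg K
          gcongr
          linarith
  have hKsum : 0 ≤ ∑ ωη : Word N × Word N, |Kα ωη.1 ωη.2| :=
    Finset.sum_nonneg (fun _ _ => abs_nonneg _)
  refine core hSG' hSG'' hN hdiam α h f (M := M) (fun x hx => hM x hx) hf
    (K := |Kh| + ∑ ωη : Word N × Word N, |Kα ωη.1 ωη.2|) hlam hls hs1 (by positivity)
    (fun ω η => hmono _ _ _ _ (by linarith) (min_le_left _ _) (hhHolder ω η))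
    (fun ω η => hmono _ _ _ _ ?_ (hssα ω η) (hαHolder ω η)) ?_
  · have := Finset.single_le_sum (f := fun ωη : Word N × Word N => |Kα ωη.1 ωη.2|)
      (fun _ _ => abs_nonneg _) (Finset.mem_univ (ω, η))
    have := abs_nonneg Kh
    simp only at *
    linarith
  · intro ω η x hx
    refine le_trans ?_ hAr
    refine le_trans ?_ (le_ciSup (f := fun ωη : Word N × Word N =>
      supAbs (SG' ×ˢ SG'') (α ωη.1 ωη.2)) (Set.finite_range _).bddAbove (ω, η))
    refine le_csSup ?_ ⟨x, hx, rfl⟩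
    refine ⟨|α ω η x| + |Kα ω η|, ?_⟩
    rintro _ ⟨y, hy, rfl⟩
    have h1 := hmono _ _ _ _ le_rfl (hssα ω η) (hαHolder ω η) y hy x hx
    have h2 : dist2 y x ^ s ≤ 1 := Real.rpow_le_one (dist2_nonneg _ _) (hdiam y hy x hx) hs0.le
    have h3 := abs_sub_abs_le_abs_sub (α ω η y) (α ω η x)
    have h4 := mul_le_mul_of_nonneg_left h2 (abs_nonneg (Kα ω η))
    simp only
    linarith
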